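/- arXiv:2212.08786 — 2 statements merged into one kernel-verified Lean document; each statement's English description precedes it below -/
import Mathlib

section
/- Let (X, d) be a proper, unbounded geodesic metric space, let p ∈ X and let S > 0. Suppose there exist a sequence of positive reals d_k → ∞ and points m_k ∈ X with d(p, m_k) = d_k/2 such that for every k and every x ∈ X with d(p, x) = (1/2 + S)·d_k one has d(x, m_k) ≥ 3·S·d_k. Then limsup_{r → ∞} diam(∂B_r(p))/r ≥ 4·S, where ∂B_r(p) = {x ∈ X : d(x, p) = r} and diam denotes the diameter (supremum of pairwise distances). -/
open Set Filter

/-- In a proper unbounded geodesic metric space, if there exist `d_k → ∞`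
and halfway points `m_k` with `dist p m_k = d_k/2` such that every point of the sphere of
radius `(1/2 + S)·d_k` about `p` is at distance at least `3·S·d_k` from `m_k`, then the
spheres about `p` have linear diameter growth at rate at least `4·S`. -/
theorem linear_diameter_growth_of_uniform_cuts
    {X : Type*} [MetricSpace X] [ProperSpace X]
    (hgeod : ∀ a b : X, ∃ γ : ℝ → X, γ 0 = a ∧ γ (dist a b) = b ∧
      ∀ s ∈ Icc (0 : ℝ) (dist a b), ∀ t ∈ Icc (0 : ℝ) (dist a b),
        dist (γ s) (γ t) = |s - t|)
    (hunb : ¬ Bornology.IsBounded (Set.univ : Set X))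
    (p : X) (S : ℝ) (hS : 0 < S)
    (d : ℕ → ℝ) (hdpos : ∀ k, 0 < d k)
    (hdiv : Tendsto d atTop atTop)
    (m : ℕ → X) (hm : ∀ k, dist p (m k) = d k / 2)
    (hcut : ∀ k, ∀ x : X, dist p x = (1 / 2 + S) * d k → 3 * S * d k ≤ dist x (m k)) :
    ENNReal.ofReal (4 * S) ≤
      Filter.limsup
        (fun r : ℝ => EMetric.diam (Metric.sphere p r) / ENNReal.ofReal r) atTop := by
  have hT : Tendsto (fun k => d k / 2) atTop atTop := hdiv.atTop_div_const (by norm_num)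
  refine le_limsup_of_frequently_le (hT.frequently (Eventually.frequently
    (Eventually.of_forall fun k => ?_)))
  have hd := hdpos k
  have hSd : 0 < S * d k := mul_pos hS hd
  have hz : ∃ z : X, (1 / 2 + S) * d k < dist p z := by
    by_contra! h
    apply hunb
    refine (Metric.isBounded_closedBall (x := p) (r := (1 / 2 + S) * d k)).subset ?_
    intro z _
    rw [Metric.mem_closedBall, dist_comm]
    exact h z
  obtain ⟨z, hz⟩ := hz
  obtain ⟨γ, h0, -, hγ⟩ := hgeod p z
  have m0 : (0 : ℝ) ∈ Icc (0 : ℝ) (dist p z) := ⟨le_rfl, dist_nonneg⟩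
  have m1 : d k / 2 ∈ Icc (0 : ℝ) (dist p z) := ⟨by linarith, by nlinarith⟩
  have m2 : (1 / 2 + S) * d k ∈ Icc (0 : ℝ) (dist p z) := ⟨by nlinarith, hz.le⟩
  have e1 := hγ _ m0 _ m1
  have e2 := hγ _ m0 _ m2
  have e3 := hγ _ m2 _ m1
  rw [h0, zero_sub, abs_neg, abs_of_nonneg m1.1] at e1
  rw [h0, zero_sub, abs_neg, abs_of_nonneg m2.1] at e2
  rw [abs_of_nonneg (by nlinarith)] at e3
  have hc := hcut k _ e2
  have ht := dist_triangle (γ ((1 / 2 + S) * d k)) (γ (d k / 2)) (m k)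
  have hq : 4 * S * (d k / 2) ≤ dist (γ (d k / 2)) (m k) := by nlinarith
  rw [ENNReal.le_div_iff_mul_le (Or.inl (by simpa using hd)) (Or.inl ENNReal.ofReal_ne_top),
    ← ENNReal.ofReal_mul (by positivity)]
  refine (ENNReal.ofReal_le_ofReal hq).trans ?_
  rw [← edist_dist]
  apply Metric.edist_le_ediam_of_mem
  · rw [Metric.mem_sphere, dist_comm, e1]
  · rw [Metric.mem_sphere, dist_comm, hm]
end

section
/- Let (X', d') be a metric space and equip X' × ℝ with the ℓ²-product metric d((x,s),(y,t)) := √(d'(x,y)² + (s−t)²). Let γ = (σ¹, σ²) : [0,1] → X' × ℝ be a continuous loop (γ(0) = γ(1)) of finite length such that L(γ) ≤ L(σ) for every continuous loop σ : [0,1] → X' × ℝ that is homotopic to γ relative to its endpoints. Then σ² is constant; that is, γ is of the form σ¹ × {c} for some c ∈ ℝ. -/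
open Set

lemma aux_dist {X' : Type*} [MetricSpace X'] (a b : WithLp 2 (X' × ℝ)) :
    dist a b = ‖(⟨dist a.fst b.fst, a.snd - b.snd⟩ : ℂ)‖ := by
  rw [WithLp.prod_dist_eq_add (by norm_num), Complex.norm_eq_sqrt_sq_add_sq, Real.sqrt_eq_rpow]
  simp [Real.dist_eq]

lemma aux_edist_le {X' : Type*} [MetricSpace X'] (a b : WithLp 2 (X' × ℝ)) :
    edist a.fst b.fst ≤ edist a b := by
  rw [edist_dist, edist_dist, aux_dist]
  apply ENNReal.ofReal_le_ofReal
  refine le_trans (le_abs_self _) ?_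
  exact Complex.abs_re_le_norm ⟨dist a.fst b.fst, a.snd - b.snd⟩

lemma aux_le {X' : Type*} [MetricSpace X'] (γ : unitInterval → WithLp 2 (X' × ℝ))
    (A : Set unitInterval) :
    eVariationOn (fun r => (γ r).fst) A ≤ eVariationOn γ A := by
  apply iSup_le
  rintro ⟨n, u, hu, us⟩
  exact (Finset.sum_le_sum fun i _ => aux_edist_le _ _).trans (eVariationOn.sum_le hu us)

lemma aux_lt {X' : Type*} [MetricSpace X'] (γ : unitInterval → WithLp 2 (X' × ℝ))
    (s t : unitInterval)
    (hfin : eVariationOn γ (univ ∩ Icc s t) ≠ ⊤) (hst : s ≤ t)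
    (hne : (γ s).snd ≠ (γ t).snd) :
    eVariationOn (fun r => (γ r).fst) (univ ∩ Icc s t) < eVariationOn γ (univ ∩ Icc s t) := by
  set V := (eVariationOn γ (univ ∩ Icc s t)).toReal with hV
  set b := (γ t).snd - (γ s).snd with hb
  have hb0 : b ≠ 0 := sub_ne_zero.2 hne.symm
  have hb2 : 0 < b ^ 2 := by positivity
  have key : ∀ (n : ℕ) (u : ℕ → unitInterval), Monotone u →
      (∀ i, u i ∈ (univ ∩ Icc s t : Set unitInterval)) →
      (∑ i ∈ Finset.range n, dist (γ (u (i+1))).fst (γ (u i)).fst) ^ 2 + b ^ 2 ≤ V ^ 2 := by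
    intro n u hu us
    have h1 : edist (γ (u 0)) (γ s) +
        (∑ i ∈ Finset.range n, edist (γ (u (i+1))) (γ (u i))) +
        edist (γ t) (γ (u n)) ≤ eVariationOn γ (univ ∩ Icc s t) := by
      have h0 := (us 0).2
      have hn := (us n).2
      have h0n := hu (Nat.zero_le n)
      rw [← eVariationOn.Icc_add_Icc γ (hn.1) hn.2 (mem_univ _),
        ← eVariationOn.Icc_add_Icc γ (h0.1) h0n (mem_univ _)]
      refine add_le_add (add_le_add ?_ ?_) ?_
      · exact eVariationOn.edist_le _ (by simp [h0.1]) (by simp [h0.1])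
      · exact eVariationOn.sum_le_of_monotoneOn_Iic (hu.monotoneOn _)
          (fun i hi => ⟨mem_univ _, hu (Nat.zero_le i), hu hi⟩)
      · exact eVariationOn.edist_le _ (by simp [hn.2]) (by simp [hn.2])
    have h2 : dist (γ (u 0)) (γ s) +
        (∑ i ∈ Finset.range n, dist (γ (u (i+1))) (γ (u i))) +
        dist (γ t) (γ (u n)) ≤ V := by
      rw [hV, ← ENNReal.ofReal_le_iff_le_toReal hfin]
      refine le_trans (le_of_eq ?_) h1
      simp only [edist_dist]
      rw [ENNReal.ofReal_add (by positivity) (by positivity),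
        ENNReal.ofReal_add (by positivity) (by positivity),
        ENNReal.ofReal_sum_of_nonneg (fun _ _ => dist_nonneg)]
    let z : unitInterval → unitInterval → ℂ :=
      fun p q => ⟨dist (γ p).fst (γ q).fst, (γ p).snd - (γ q).snd⟩
    let W : ℂ := z (u 0) s + (∑ i ∈ Finset.range n, z (u (i+1)) (u i)) + z t (u n)
    have h3 : ‖W‖ ≤ V := by
      refine le_trans ?_ h2
      simp only [aux_dist]
      refine (norm_add_le _ _).trans (add_le_add ((norm_add_le _ _).trans
        (add_le_add le_rfl (norm_sum_le _ _))) le_rfl)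
    have him : W.im = b := by
      have : ∑ i ∈ Finset.range n, ((γ (u (i+1))).snd - (γ (u i)).snd)
          = (γ (u n)).snd - (γ (u 0)).snd :=
        Finset.sum_range_sub (fun i => (γ (u i)).snd) n
      simp only [W, z, Complex.add_im, Complex.im_sum, this, hb]
      ring
    have hre : ∑ i ∈ Finset.range n, dist (γ (u (i+1))).fst (γ (u i)).fst ≤ W.re := by
      simp only [W, z, Complex.add_re, Complex.re_sum]
      have := dist_nonneg (x := (γ (u 0)).fst) (y := (γ s).fst)
      have := dist_nonneg (x := (γ t).fst) (y := (γ (u n)).fst)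
      linarith
    have hW : W.re ^ 2 + W.im ^ 2 = ‖W‖ ^ 2 := by
      rw [Complex.sq_norm, Complex.normSq_apply]; ring
    rw [him] at hW
    have h5 : ‖W‖ ^ 2 ≤ V ^ 2 := pow_le_pow_left₀ (norm_nonneg _) h3 2
    have h6 := pow_le_pow_left₀ (Finset.sum_nonneg fun i (_ : i ∈ Finset.range n) =>
      dist_nonneg (x := (γ (u (i+1))).fst) (y := (γ (u i)).fst)) hre 2
    linarith
  have hVb : b ^ 2 ≤ V ^ 2 := by
    simpa using key 0 (fun _ => s) monotone_const (fun _ => ⟨mem_univ _, le_rfl, hst⟩)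
  have hV0 : 0 < V := by
    have : 0 ≤ V := ENNReal.toReal_nonneg
    rcases this.lt_or_eq with h | h
    · exact h
    · rw [← h] at hVb; nlinarith
  have hle : eVariationOn (fun r => (γ r).fst) (univ ∩ Icc s t)
      ≤ ENNReal.ofReal (√(V ^ 2 - b ^ 2)) := by
    apply iSup_le
    rintro ⟨n, u, hu, us⟩
    simp only [edist_dist]
    rw [← ENNReal.ofReal_sum_of_nonneg (fun _ _ => dist_nonneg)]
    apply ENNReal.ofReal_le_ofReal
    apply Real.le_sqrt_of_sq_le
    have := key n u hu us
    linarith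
  refine hle.trans_lt ?_
  rw [ENNReal.ofReal_lt_iff_lt_toReal (Real.sqrt_nonneg _) hfin, ← hV,
    Real.sqrt_lt' hV0]
  linarith

/-- In the `ℓ²`-product `X' × ℝ` of a metric space `X'` with `ℝ`, a
continuous loop of finite length which minimizes length among all loops homotopic to it
relative to its endpoints has constant `ℝ`-component. -/
theorem minimal_loop_in_product_has_constant_real_component
    {X' : Type*} [MetricSpace X']
    (x : WithLp 2 (X' × ℝ)) (γ : Path x x)
    (hfin : eVariationOn (⇑γ) (Set.univ : Set unitInterval) ≠ ⊤)
    (hmin : ∀ σ : Path x x, γ.Homotopic σ →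
      eVariationOn (⇑γ) (Set.univ : Set unitInterval) ≤
        eVariationOn (⇑σ) (Set.univ : Set unitInterval)) :
    ∀ s t : unitInterval,
      (WithLp.equiv 2 (X' × ℝ) (γ s)).2 = (WithLp.equiv 2 (X' × ℝ) (γ t)).2 := by
  have hc1 : Continuous fun r => (γ r).fst :=
    (WithLp.continuous_fst 2 X' ℝ).comp γ.continuous
  have hc2 : Continuous fun r => (γ r).snd :=
    (WithLp.continuous_snd 2 X' ℝ).comp γ.continuous
  let σ : Path x x :=
    { toFun := fun r => WithLp.toLp 2 ((γ r).fst, x.snd)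
      continuous_toFun := (WithLp.prod_continuous_toLp 2 X' ℝ).comp
        (hc1.prodMk continuous_const)
      source' := by rw [γ.source]; rfl
      target' := by rw [γ.target]; rfl }
  have hhom : γ.Homotopic σ := by
    refine ⟨⟨⟨⟨fun p => WithLp.toLp 2 ((γ p.2).fst,
      (1 - (p.1 : ℝ)) * (γ p.2).snd + (p.1 : ℝ) * x.snd), ?_⟩, ?_, ?_⟩, ?_⟩⟩
    · refine (WithLp.prod_continuous_toLp 2 X' ℝ).comp
        ((hc1.comp continuous_snd).prodMk ?_)
      have := hc2.comp (continuous_snd (X := unitInterval) (Y := unitInterval))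
      have h2 : Continuous fun p : unitInterval × unitInterval => (p.1 : ℝ) := by fun_prop
      exact ((continuous_const.sub h2).mul this).add (h2.mul continuous_const)
    · intro r
      simp
      rfl
    · intro r
      simp [σ]
    · intro r p hp
      have hp' : γ p = x := by
        rcases hp with rfl | rfl
        · exact γ.source
        · exact γ.target
      change WithLp.toLp 2 ((γ p).fst, (1 - (r : ℝ)) * (γ p).snd + (r : ℝ) * x.snd) = γ p
      rw [hp']
      have : (1 - (r : ℝ)) * x.snd + (r : ℝ) * x.snd = x.snd := by ring
      rw [this]
      rfl
  have hσ : eVariationOn σ univ ≤ eVariationOn (fun r => (γ r).fst) univ := by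
    apply iSup_le
    rintro ⟨n, u, hu, us⟩
    refine le_trans (Finset.sum_le_sum fun i _ => ?_) (eVariationOn.sum_le (n := n) hu us)
    change edist (WithLp.toLp 2 ((γ (u (i+1))).fst, x.snd) : WithLp 2 (X' × ℝ))
      (WithLp.toLp 2 ((γ (u i)).fst, x.snd)) ≤ _
    rw [edist_dist, edist_dist, aux_dist]
    apply ENNReal.ofReal_le_ofReal
    rw [Complex.norm_eq_sqrt_sq_add_sq]
    simp [Real.sqrt_sq dist_nonneg]
  suffices h : ∀ t, (γ t).snd = x.snd from fun s t => (h s).trans (h t).symm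
  intro t
  by_contra hne
  have huniv : (univ : Set unitInterval) = univ ∩ Icc 0 1 := by
    ext r; simp [r.2.1, unitInterval.le_one']
  have hf : ∀ A, eVariationOn γ A ≠ ⊤ := fun A =>
    ne_top_of_le_ne_top hfin (eVariationOn.mono _ (subset_univ _))
  have hlt := aux_lt γ 0 t (hf _) t.2.1 (by rw [γ.source]; exact Ne.symm hne)
  have hle := aux_le γ (univ ∩ Icc t 1)
  have := (hmin σ hhom).trans hσ
  rw [huniv, ← eVariationOn.Icc_add_Icc _ (show 0 ≤ t from t.2.1) (show t ≤ 1 from t.2.2)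
    (mem_univ _), ← eVariationOn.Icc_add_Icc _ (show 0 ≤ t from t.2.1)
    (show t ≤ 1 from t.2.2) (mem_univ _)] at this
  exact absurd this (not_le.2 (ENNReal.add_lt_add_of_lt_of_le
    (ne_top_of_le_ne_top (hf _) hle) hlt hle))
end
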